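/- GL_r(2) is a left module algebra over the Hopf algebra H = ℂ[f, f^{-1}] (group algebra of ℤ, with f group-like) under the action f ▷ a = a, f ▷ b = s b, f ▷ c = s^{-1} c, f ▷ d = d: the action satisfies f ▷ (xy) = (f ▷ x)(f ▷ y) and f ▷ 1 = 1 for all x, y ∈ GL_r(2), and the cross-product algebra GL_r(2) ⋊ H is then precisely A_{r,s}. -/

import Mathlib

open scoped TensorProduct

noncomputable section

/-- Generators of the cross-product algebra `A_{r,s}`. -/
inductive Gen : Type
  | a | b | c | d | f | fi
deriving DecidableEq

/-- The free algebra on the generators. -/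
abbrev FA : Type := FreeAlgebra ℂ Gen

/-- The generators inside the free algebra. -/
def X (g : Gen) : FA := FreeAlgebra.ι ℂ g

/-- The defining relations of `A_{r,s}`. -/
inductive ArsRel (r s : ℂ) : FA → FA → Prop
  | ab : ArsRel r s (X .a * X .b) (r⁻¹ • (X .b * X .a))
  | bd : ArsRel r s (X .b * X .d) (r⁻¹ • (X .d * X .b))
  | ac : ArsRel r s (X .a * X .c) (r⁻¹ • (X .c * X .a))
  | cd : ArsRel r s (X .c * X .d) (r⁻¹ • (X .d * X .c))
  | bc : ArsRel r s (X .b * X .c) (X .c * X .b)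
  | ad : ArsRel r s (X .a * X .d - X .d * X .a) ((r⁻¹ - r) • (X .b * X .c))
  | af : ArsRel r s (X .a * X .f) (X .f * X .a)
  | cf : ArsRel r s (X .c * X .f) (s • (X .f * X .c))
  | bf : ArsRel r s (X .b * X .f) (s⁻¹ • (X .f * X .b))
  | df : ArsRel r s (X .d * X .f) (X .f * X .d)
  | ffi : ArsRel r s (X .f * X .fi) 1
  | fif : ArsRel r s (X .fi * X .f) 1

/-- The cross-product quantum algebra `A_{r,s}`. -/
abbrev Ars (r s : ℂ) : Type := RingQuot (ArsRel r s)

/-- The generators of `A_{r,s}`. -/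
def gen (r s : ℂ) (g : Gen) : Ars r s := RingQuot.mkAlgHom ℂ (ArsRel r s) (X g)

/-- Generators of `GL_r(2)`. -/
inductive Gen4 : Type
  | a | b | c | d
deriving DecidableEq

abbrev FB : Type := FreeAlgebra ℂ Gen4

def Y (g : Gen4) : FB := FreeAlgebra.ι ℂ g

/-- The defining relations of `GL_r(2)`. -/
inductive GLRel (r : ℂ) : FB → FB → Prop
  | ab : GLRel r (Y .a * Y .b) (r⁻¹ • (Y .b * Y .a))
  | bd : GLRel r (Y .b * Y .d) (r⁻¹ • (Y .d * Y .b))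
  | ac : GLRel r (Y .a * Y .c) (r⁻¹ • (Y .c * Y .a))
  | cd : GLRel r (Y .c * Y .d) (r⁻¹ • (Y .d * Y .c))
  | bc : GLRel r (Y .b * Y .c) (Y .c * Y .b)
  | ad : GLRel r (Y .a * Y .d - Y .d * Y .a) ((r⁻¹ - r) • (Y .b * Y .c))

/-- The quantum group(-algebra) `GL_r(2)`. -/
abbrev GL2 (r : ℂ) : Type := RingQuot (GLRel r)

/-- The generators of `GL_r(2)`. -/
def gen4 (r : ℂ) (g : Gen4) : GL2 r := RingQuot.mkAlgHom ℂ (GLRel r) (Y g)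

/-- The algebra map out of `GL_r(2)` determined by the images of the generators. -/
def GL2.lift {r : ℂ} {B : Type*} [Ring B] [Algebra ℂ B] (v : Gen4 → B)
    (hab : v .a * v .b = r⁻¹ • (v .b * v .a)) (hbd : v .b * v .d = r⁻¹ • (v .d * v .b))
    (hac : v .a * v .c = r⁻¹ • (v .c * v .a)) (hcd : v .c * v .d = r⁻¹ • (v .d * v .c))
    (hbc : v .b * v .c = v .c * v .b)
    (had : v .a * v .d - v .d * v .a = (r⁻¹ - r) • (v .b * v .c)) : GL2 r →ₐ[ℂ] B :=
  RingQuot.liftAlgHom ℂ ⟨FreeAlgebra.lift ℂ v, by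
    rintro _ _ (_ | _) <;> simpa [Y]⟩

@[simp]
theorem GL2.lift_gen4 {r : ℂ} {B : Type*} [Ring B] [Algebra ℂ B] (v : Gen4 → B)
    (hab hbd hac hcd hbc had) (g : Gen4) :
    GL2.lift (r := r) v hab hbd hac hcd hbc had (gen4 r g) = v g := by
  simp [GL2.lift, gen4, Y]

theorem GL2.algHom_ext {r : ℂ} {B : Type*} [Semiring B] [Algebra ℂ B] {φ ψ : GL2 r →ₐ[ℂ] B}
    (h : ∀ g, φ (gen4 r g) = ψ (gen4 r g)) : φ = ψ := by
  apply RingQuot.ringQuot_ext'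
  apply FreeAlgebra.hom_ext
  funext g
  exact h g

theorem gen4_rel {r : ℂ} {x y : FB} (h : GLRel r x y) :
    RingQuot.mkAlgHom ℂ (GLRel r) x = RingQuot.mkAlgHom ℂ (GLRel r) y :=
  RingQuot.mkAlgHom_rel ℂ h

theorem gen_rel {r s : ℂ} {x y : FA} (h : ArsRel r s x y) :
    RingQuot.mkAlgHom ℂ (ArsRel r s) x = RingQuot.mkAlgHom ℂ (ArsRel r s) y :=
  RingQuot.mkAlgHom_rel ℂ h

theorem Ars.induction {r s : ℂ} {P : Ars r s → Prop} (hz : ∀ z : ℂ, P (algebraMap ℂ _ z))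
    (hg : ∀ g, P (gen r s g)) (hmul : ∀ u v, P u → P v → P (u * v))
    (hadd : ∀ u v, P u → P v → P (u + v)) (u : Ars r s) : P u := by
  obtain ⟨w, rfl⟩ := RingQuot.mkAlgHom_surjective ℂ (ArsRel r s) u
  induction w using FreeAlgebra.induction with
  | grade0 z => simpa using hz z
  | grade1 g => exact hg g
  | mul x y hx hy => simpa using hmul _ _ hx hy
  | add x y hx hy => simpa using hadd _ _ hx hy

/-- The weight by which `f` scales each generator of `GL_r(2)`, with parameter `s = t`. -/
def weight (t : ℂ) : Gen4 → ℂ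
  | .a => 1
  | .b => t
  | .c => t⁻¹
  | .d => 1

/-- The endomorphism of `GL_r(2)` rescaling the generators by their weights. -/
def rescale (r t : ℂ) (ht : t ≠ 0) : GL2 r →ₐ[ℂ] GL2 r :=
  GL2.lift (fun g => weight t g • gen4 r g)
    (by simpa [weight, gen4, smul_comm r⁻¹ t, ht] using gen4_rel (GLRel.ab (r := r)))
    (by simpa [weight, gen4, smul_comm r⁻¹ t, ht] using gen4_rel (GLRel.bd (r := r)))
    (by simpa [weight, gen4, smul_comm r⁻¹ t⁻¹, ht] using gen4_rel (GLRel.ac (r := r)))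
    (by simpa [weight, gen4, smul_comm r⁻¹ t⁻¹, ht] using gen4_rel (GLRel.cd (r := r)))
    (by simpa [weight, gen4, smul_smul, ht] using gen4_rel (GLRel.bc (r := r)))
    (by simpa [weight, gen4, smul_smul, ht] using gen4_rel (GLRel.ad (r := r)))

theorem rescale_gen4 (r t : ℂ) (ht : t ≠ 0) (g : Gen4) :
    rescale r t ht (gen4 r g) = weight t g • gen4 r g := by
  simp [rescale]

theorem rescale_comp_inv (r t u : ℂ) (ht : t ≠ 0) (hu : u ≠ 0) (h : t * u = 1) :
    (rescale r t ht).comp (rescale r u hu) = AlgHom.id ℂ _ := by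
  obtain rfl : u = t⁻¹ := eq_inv_of_mul_eq_one_right h
  apply GL2.algHom_ext
  intro g
  cases g <;> simp [rescale_gen4, weight, smul_smul, ht]

/-- The action of `f` on `GL_r(2)`. -/
def fAction (r s : ℂ) (hs : s ≠ 0) : GL2 r ≃ₐ[ℂ] GL2 r :=
  AlgEquiv.ofAlgHom (rescale r s hs) (rescale r s⁻¹ (inv_ne_zero hs))
    (rescale_comp_inv _ _ _ _ _ (by simp [hs])) (rescale_comp_inv _ _ _ _ _ (by simp [hs]))

theorem fAction_gen4 (r s : ℂ) (hs : s ≠ 0) (g : Gen4) :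
    fAction r s hs (gen4 r g) = weight s g • gen4 r g :=
  rescale_gen4 r s hs g

/-- The inclusion of generators. -/
def Gen4.toGen : Gen4 → Gen
  | .a => .a
  | .b => .b
  | .c => .c
  | .d => .d

/-- The canonical map from `GL_r(2)` to `A_{r,s}`. -/
def GL2.toArs (r s : ℂ) : GL2 r →ₐ[ℂ] Ars r s :=
  GL2.lift (fun g => gen r s g.toGen)
    (by simpa [gen, Gen4.toGen] using gen_rel (ArsRel.ab (r := r) (s := s)))
    (by simpa [gen, Gen4.toGen] using gen_rel (ArsRel.bd (r := r) (s := s)))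
    (by simpa [gen, Gen4.toGen] using gen_rel (ArsRel.ac (r := r) (s := s)))
    (by simpa [gen, Gen4.toGen] using gen_rel (ArsRel.cd (r := r) (s := s)))
    (by simpa [gen, Gen4.toGen] using gen_rel (ArsRel.bc (r := r) (s := s)))
    (by simpa [gen, Gen4.toGen] using gen_rel (ArsRel.ad (r := r) (s := s)))

theorem GL2.toArs_gen4 (r s : ℂ) (g : Gen4) : GL2.toArs r s (gen4 r g) = gen r s g.toGen := by
  simp [GL2.toArs]

/-- The generator `f` as a unit of `A_{r,s}`. -/
def fUnit (r s : ℂ) : (Ars r s)ˣ where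
  val := gen r s .f
  inv := gen r s .fi
  val_inv := by simpa [gen] using gen_rel (ArsRel.ffi (r := r) (s := s))
  inv_val := by simpa [gen] using gen_rel (ArsRel.fif (r := r) (s := s))

theorem fUnit_mul_toArs (r s : ℂ) (hs : s ≠ 0) (x : GL2 r) :
    (fUnit r s : Ars r s) * GL2.toArs r s x =
      GL2.toArs r s (fAction r s hs x) * (fUnit r s : Ars r s) := by
  have hconj : ((MulSemiringAction.toAlgHom ℂ (Ars r s) (ConjAct.toConjAct (fUnit r s))).comp
      (GL2.toArs r s)) = (GL2.toArs r s).comp (fAction r s hs : GL2 r →ₐ[ℂ] GL2 r) := by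
    apply GL2.algHom_ext
    intro g
    have haf := gen_rel (ArsRel.af (r := r) (s := s))
    have hbf := gen_rel (ArsRel.bf (r := r) (s := s))
    have hcf := gen_rel (ArsRel.cf (r := r) (s := s))
    have hdf := gen_rel (ArsRel.df (r := r) (s := s))
    simp only [map_mul, map_smul] at haf hbf hcf hdf
    simp only [AlgHom.comp_apply, MulSemiringAction.toAlgHom_apply, ConjAct.units_smul_def,
      ConjAct.ofConjAct_toConjAct, Units.mul_inv_eq_iff_eq_mul, AlgEquiv.coe_toAlgHom,
      fAction_gen4, map_smul, GL2.toArs_gen4]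
    cases g <;> simp [Gen4.toGen, weight, fUnit, gen, haf, hbf, hcf, hdf, smul_smul, hs]
  have := DFunLike.congr_fun hconj x
  simpa [ConjAct.units_smul_def, Units.mul_inv_eq_iff_eq_mul] using this

theorem fUnit_zpow_mul_toArs (r s : ℂ) (hs : s ≠ 0) (m : ℤ) (x : GL2 r) :
    ((fUnit r s ^ m : (Ars r s)ˣ) : Ars r s) * GL2.toArs r s x =
      GL2.toArs r s ((fAction r s hs ^ m) x) * ((fUnit r s ^ m : (Ars r s)ˣ) : Ars r s) := by
  induction m generalizing x with
  | zero => simp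
  | succ n ih =>
    rw [zpow_add_one, zpow_add_one, Units.val_mul, mul_assoc, fUnit_mul_toArs r s hs,
      ← mul_assoc, ih, mul_assoc, AlgEquiv.mul_apply]
  | pred n ih =>
    obtain ⟨y, rfl⟩ := (fAction r s hs).surjective x
    have hinv : ((fUnit r s)⁻¹ : (Ars r s)ˣ) * GL2.toArs r s (fAction r s hs y) =
        GL2.toArs r s y * ((fUnit r s)⁻¹ : (Ars r s)ˣ) := by
      rw [Units.inv_mul_eq_iff_eq_mul, ← mul_assoc, fUnit_mul_toArs r s hs,
        Units.mul_inv_cancel_right]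
    rw [zpow_sub_one, zpow_sub_one, Units.val_mul, mul_assoc, hinv, ← mul_assoc, ih, mul_assoc,
      AlgEquiv.mul_apply]
    congr 3
    exact ((fAction r s hs).symm_apply_apply y).symm

/-- The map `Σ_n x_n ⊗ f^n ↦ Σ_n x_n f^n`. -/
def crossToArs (r s : ℂ) : (ℤ →₀ GL2 r) →ₗ[ℂ] Ars r s :=
  Finsupp.lsum ℂ fun n =>
    LinearMap.mulRight ℂ ((fUnit r s ^ n : (Ars r s)ˣ) : Ars r s) ∘ₗ (GL2.toArs r s).toLinearMap

theorem crossToArs_single (r s : ℂ) (n : ℤ) (x : GL2 r) :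
    crossToArs r s (Finsupp.single n x) =
      GL2.toArs r s x * ((fUnit r s ^ n : (Ars r s)ˣ) : Ars r s) := by
  simp [crossToArs]

/-- Left multiplication by `f ^ k` on the cross product, written on `ℤ →₀ GL_r(2)`. -/
def shift (r s : ℂ) (hs : s ≠ 0) (k : ℤ) : Module.End ℂ (ℤ →₀ GL2 r) :=
  Finsupp.lsum ℂ fun n =>
    Finsupp.lsingle (k + n) ∘ₗ
      ((fAction r s hs ^ k : GL2 r ≃ₐ[ℂ] GL2 r) : GL2 r →ₐ[ℂ] GL2 r).toLinearMap

theorem shift_single (r s : ℂ) (hs : s ≠ 0) (k n : ℤ) (x : GL2 r) :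
    shift r s hs k (Finsupp.single n x) = Finsupp.single (k + n) ((fAction r s hs ^ k) x) := by
  simp [shift]

theorem shift_mul_shift (r s : ℂ) (hs : s ≠ 0) (k l : ℤ) :
    shift r s hs k * shift r s hs l = shift r s hs (k + l) := by
  apply Finsupp.lhom_ext
  intro n x
  simp [shift_single, zpow_add, add_assoc]

theorem shift_zero (r s : ℂ) (hs : s ≠ 0) : shift r s hs 0 = 1 := by
  apply Finsupp.lhom_ext
  intro n x
  simp [shift_single]

/-- Left multiplication by `GL_r(2)` on the cross product. -/
abbrev leftMul (r : ℂ) : GL2 r →ₐ[ℂ] Module.End ℂ (ℤ →₀ GL2 r) :=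
  Algebra.lsmul ℂ ℂ (ℤ →₀ GL2 r)

theorem leftMul_single (r : ℂ) (x : GL2 r) (n : ℤ) (y : GL2 r) :
    leftMul r x (Finsupp.single n y) = Finsupp.single n (x * y) :=
  Finsupp.smul_single x n y

theorem shift_mul_leftMul (r s : ℂ) (hs : s ≠ 0) (x : GL2 r) :
    shift r s hs 1 * leftMul r x = leftMul r (fAction r s hs x) * shift r s hs 1 := by
  apply Finsupp.lhom_ext
  intro n y
  simp only [Module.End.mul_apply, leftMul_single, shift_single, zpow_one, map_mul]

/-- The operators by which the generators of `A_{r,s}` act on the cross product. -/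
def regularGen (r s : ℂ) (hs : s ≠ 0) : Gen → Module.End ℂ (ℤ →₀ GL2 r)
  | .a => leftMul r (gen4 r .a)
  | .b => leftMul r (gen4 r .b)
  | .c => leftMul r (gen4 r .c)
  | .d => leftMul r (gen4 r .d)
  | .f => shift r s hs 1
  | .fi => shift r s hs (-1)

theorem end_add_right_cancel {r : ℂ} {T U V : Module.End ℂ (ℤ →₀ GL2 r)}
    (h : T + V = U + V) : T = U := by
  ext1 n
  ext x k
  exact add_right_cancel (G := GL2 r)
    (DFunLike.congr_fun (LinearMap.congr_fun h (Finsupp.single n x)) k)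

/-- The left regular representation of `A_{r,s}` on the cross product. -/
def regularRep (r s : ℂ) (hs : s ≠ 0) : Ars r s →ₐ[ℂ] Module.End ℂ (ℤ →₀ GL2 r) :=
  RingQuot.liftAlgHom ℂ ⟨FreeAlgebra.lift ℂ (regularGen r s hs), by
    have hrel : ∀ {x y : FB}, GLRel r x y → leftMul r (RingQuot.mkAlgHom ℂ (GLRel r) x) =
      leftMul r (RingQuot.mkAlgHom ℂ (GLRel r) y) := fun h => congrArg _ (gen4_rel h)
    have hshift := fun g => shift_mul_leftMul r s hs (gen4 r g)
    simp only [fAction_gen4, map_smul, smul_mul_assoc] at hshift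
    rintro _ _ (_ | _) <;>
      simp only [map_mul, map_smul, map_one, X, FreeAlgebra.lift_ι_apply, regularGen]
    · simpa only [map_mul, map_smul, gen4] using hrel .ab
    · simpa only [map_mul, map_smul, gen4] using hrel .bd
    · simpa only [map_mul, map_smul, gen4] using hrel .ac
    · simpa only [map_mul, map_smul, gen4] using hrel .cd
    · simpa only [map_mul, map_smul, gen4] using hrel .bc
    · apply end_add_right_cancel (V := leftMul r (gen4 r .d) * leftMul r (gen4 r .a))
      have hX := congrArg (FreeAlgebra.lift ℂ (regularGen r s hs))
        (sub_add_cancel (X .a * X .d) (X .d * X .a))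
      have hY := congrArg (fun x => leftMul r (RingQuot.mkAlgHom ℂ (GLRel r) x))
        (sub_add_cancel (Y .a * Y .d) (Y .d * Y .a))
      simp only [map_add, hrel .ad] at hX hY
      simp only [map_mul, map_smul, X, FreeAlgebra.lift_ι_apply, regularGen] at hX hY
      exact hX.trans hY.symm
    · simp [hshift, weight]
    · simp only [hshift, weight, smul_smul, mul_inv_cancel₀ hs, one_smul]
    · simp only [hshift, weight, smul_smul, inv_mul_cancel₀ hs, one_smul]
    · simp [hshift, weight]
    · simp [shift_mul_shift, shift_zero]
    · simp [shift_mul_shift, shift_zero]⟩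

theorem regularRep_gen (r s : ℂ) (hs : s ≠ 0) (g : Gen) :
    regularRep r s hs (gen r s g) = regularGen r s hs g := by
  simp [regularRep, gen, X]

theorem regularRep_toArs (r s : ℂ) (hs : s ≠ 0) (x : GL2 r) :
    regularRep r s hs (GL2.toArs r s x) = leftMul r x := by
  have : (regularRep r s hs).comp (GL2.toArs r s) = leftMul r := by
    apply GL2.algHom_ext
    intro g
    rw [AlgHom.comp_apply, GL2.toArs_gen4, regularRep_gen]
    cases g <;> rfl
  exact DFunLike.congr_fun this x

theorem regularRep_fUnit_zpow (r s : ℂ) (hs : s ≠ 0) (m : ℤ) :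
    regularRep r s hs ((fUnit r s ^ m : (Ars r s)ˣ) : Ars r s) = shift r s hs m := by
  induction m with
  | zero => simp [shift_zero]
  | succ n ih =>
    rw [zpow_add_one, Units.val_mul, map_mul, ih, ← shift_mul_shift]
    exact congrArg _ (regularRep_gen r s hs .f)
  | pred n ih =>
    rw [zpow_sub_one, Units.val_mul, map_mul, ih, sub_eq_add_neg, ← shift_mul_shift]
    exact congrArg _ (regularRep_gen r s hs .fi)

theorem regularRep_crossToArs (r s : ℂ) (hs : s ≠ 0) (p : ℤ →₀ GL2 r) :
    regularRep r s hs (crossToArs r s p) (Finsupp.single 0 1) = p := by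
  induction p using Finsupp.induction_linear with
  | zero => simp
  | add p q hp hq => rw [map_add, map_add, LinearMap.add_apply, hp, hq]
  | single n x =>
    rw [crossToArs_single, map_mul, regularRep_toArs, regularRep_fUnit_zpow]
    simp [shift_single]

theorem crossToArs_single_mul_single (r s : ℂ) (hs : s ≠ 0) (m n : ℤ) (x y : GL2 r) :
    crossToArs r s (Finsupp.single m x) * crossToArs r s (Finsupp.single n y) =
      crossToArs r s (Finsupp.single (m + n) (x * (fAction r s hs ^ m) y)) := by
  simp only [crossToArs_single, map_mul, zpow_add, Units.val_mul, mul_assoc]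
  congr 1
  rw [← mul_assoc, fUnit_zpow_mul_toArs r s hs, mul_assoc]

theorem crossToArs_leftMul (r s : ℂ) (x : GL2 r) (p : ℤ →₀ GL2 r) :
    crossToArs r s (leftMul r x p) = GL2.toArs r s x * crossToArs r s p := by
  induction p using Finsupp.induction_linear with
  | zero => simp
  | add p q hp hq => rw [map_add, map_add, map_add, hp, hq, mul_add]
  | single n y => rw [leftMul_single, crossToArs_single, crossToArs_single, map_mul, mul_assoc]

theorem crossToArs_shift (r s : ℂ) (hs : s ≠ 0) (k : ℤ) (p : ℤ →₀ GL2 r) :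
    crossToArs r s (shift r s hs k p) =
      ((fUnit r s ^ k : (Ars r s)ˣ) : Ars r s) * crossToArs r s p := by
  induction p using Finsupp.induction_linear with
  | zero => simp
  | add p q hp hq => rw [map_add, map_add, map_add, hp, hq, mul_add]
  | single n y =>
    rw [shift_single, crossToArs_single, crossToArs_single, ← mul_assoc,
      fUnit_zpow_mul_toArs r s hs, zpow_add, Units.val_mul, mul_assoc]

theorem crossToArs_regularRep (r s : ℂ) (hs : s ≠ 0) (u : Ars r s) (p : ℤ →₀ GL2 r) :
    crossToArs r s (regularRep r s hs u p) = u * crossToArs r s p := by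
  induction u using Ars.induction generalizing p with
  | hz z => simp [Algebra.algebraMap_eq_smul_one]
  | hg g =>
    rw [regularRep_gen]
    cases g
    case f => simpa [fUnit, regularGen] using crossToArs_shift r s hs 1 p
    case fi => simpa [fUnit, regularGen] using crossToArs_shift r s hs (-1) p
    all_goals
      simp only [regularGen, crossToArs_leftMul, GL2.toArs_gen4, Gen4.toGen]
  | hmul u v hu hv => rw [map_mul, Module.End.mul_apply, hu, hv, mul_assoc]
  | hadd u v hu hv => rw [map_add, LinearMap.add_apply, map_add, hu, hv, add_mul]

theorem crossToArs_one (r s : ℂ) : crossToArs r s (Finsupp.single 0 1) = 1 := by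
  simp [crossToArs_single]

theorem crossToArs_bijective (r s : ℂ) (hs : s ≠ 0) : Function.Bijective (crossToArs r s) :=
  Function.bijective_iff_has_inverse.mpr
    ⟨fun u => regularRep r s hs u (Finsupp.single 0 1), regularRep_crossToArs r s hs,
      fun u => by simp only [crossToArs_regularRep, crossToArs_one, mul_one]⟩

theorem fUnit_zpow_eq (r s : ℂ) (m : ℤ) :
    ((fUnit r s ^ m : (Ars r s)ˣ) : Ars r s) =
      gen r s .f ^ m.toNat * gen r s .fi ^ (-m).toNat := by
  obtain ⟨n, rfl | rfl⟩ := m.eq_nat_or_neg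
  · simp [fUnit]
  · rw [zpow_neg, zpow_natCast, ← inv_pow]
    simp [fUnit]

/-- `GL_r(2)` is a left module algebra over the Hopf algebra `H = ℂ[f,f⁻¹]`
(the group algebra of `ℤ`, with `f` group-like) under the action
`f ▷ a = a`, `f ▷ b = s b`, `f ▷ c = s⁻¹ c`, `f ▷ d = d`: the action of `f` is by an
algebra automorphism `σ` (so `f ▷ (xy) = (f ▷ x)(f ▷ y)` and `f ▷ 1 = 1`), and the
cross product `GL_r(2) ⋊ H` is precisely `A_{r,s}`: the map
`Σ_n x_n ⊗ f^n ↦ Σ_n x_n f^n` from `GL_r(2) ⊗ ℂ[ℤ] ≅ (ℤ →₀ GL_r(2))` to `A_{r,s}`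
is an additive ℂ-linear bijection carrying the cross-product multiplication
`(x ⊗ f^m)(y ⊗ f^n) = x (f^m ▷ y) ⊗ f^{m+n} = x σ^m(y) ⊗ f^{m+n}` to the
multiplication of `A_{r,s}`. -/
theorem stmt16 (r s : ℂ) (hr : r ≠ 0) (hs : s ≠ 0) :
    ∃ σ : GL2 r ≃ₐ[ℂ] GL2 r,
      σ (gen4 r .a) = gen4 r .a ∧
      σ (gen4 r .b) = s • gen4 r .b ∧
      σ (gen4 r .c) = s⁻¹ • gen4 r .c ∧
      σ (gen4 r .d) = gen4 r .d ∧
      (∀ x y : GL2 r, σ (x * y) = σ x * σ y) ∧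
      σ 1 = 1 ∧
      ∃ Φ : (ℤ →₀ GL2 r) → Ars r s,
        Function.Bijective Φ ∧
        (∀ p q : ℤ →₀ GL2 r, Φ (p + q) = Φ p + Φ q) ∧
        (∀ (z : ℂ) (p : ℤ →₀ GL2 r), Φ (z • p) = z • Φ p) ∧
        Φ (Finsupp.single 0 1) = 1 ∧
        (∀ m : ℤ, Φ (Finsupp.single m 1) = gen r s .f ^ m.toNat * gen r s .fi ^ (-m).toNat) ∧
        (∀ (m n : ℤ) (x y : GL2 r),
          Φ (Finsupp.single m x) * Φ (Finsupp.single n y) =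
            Φ (Finsupp.single (m + n) (x * (σ ^ m) y))) := by
  refine ⟨fAction r s hs, by simp [fAction_gen4, weight], by simp [fAction_gen4, weight],
    by simp [fAction_gen4, weight], by simp [fAction_gen4, weight], map_mul _, map_one _,
    crossToArs r s, crossToArs_bijective r s hs, map_add _, map_smul _, crossToArs_one r s,
    fun m => ?_, crossToArs_single_mul_single r s hs⟩
  rw [crossToArs_single, map_one, one_mul, fUnit_zpow_eq]
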